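/- For every real number x ≥ 1 and every real ε with 0 < ε < 1/2, one has 8·x^((1+ε)/2) ≥ 8·(x − x^(1−ε)/2)^((1+ε)/2) + (x/2)^((1−ε)/2). -/

import Mathlib

/-!
Write `p = (1 + ε) / 2`. Removing `x ^ (1 - ε) / 2` from `x` multiplies `x` by `1 - t` with
`t = x ^ (-ε) / 2`. Since `1 / 2 ≤ p`, Bernoulli's inequality gives
`(1 - t) ^ p ≤ (1 - t) ^ (1 / 2) ≤ 1 - t / 2`, so `x ^ p` drops by at least
`x ^ p * t / 2 = x ^ (p - ε) / 4`. As `p - ε = (1 - ε) / 2`, four times this drop already pays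
for `x ^ ((1 - ε) / 2)`.
-/

section

variable {p q x : ℝ}

theorem one_sub_rpow_le_one_sub_mul {t : ℝ} (hq₀ : 0 ≤ q) (hq₁ : q ≤ 1) (hqp : q ≤ p)
    (ht₀ : 0 ≤ t) (ht₁ : t ≤ 1) : (1 - t) ^ p ≤ 1 - q * t :=
  calc
    (1 - t) ^ p ≤ (1 - t) ^ q :=
      Real.rpow_le_rpow_of_exponent_ge' (by linarith) (by linarith) hq₀ hqp
    _ = (1 + -t) ^ q := by rw [sub_eq_add_neg]
    _ ≤ 1 + q * -t := rpow_one_add_le_one_add_mul_self (by linarith) hq₀ hq₁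
    _ = 1 - q * t := by ring

theorem sub_rpow_le_rpow_sub_mul_rpow_sub_one {d : ℝ} (hq₀ : 0 ≤ q) (hq₁ : q ≤ 1)
    (hqp : q ≤ p) (hx : 0 < x) (hd₀ : 0 ≤ d) (hdx : d ≤ x) :
    (x - d) ^ p ≤ x ^ p - q * d * x ^ (p - 1) := by
  have ht₁ : d / x ≤ 1 := (div_le_one hx).2 hdx
  calc
    (x - d) ^ p = (x * (1 - d / x)) ^ p := by field_simp
    _ = x ^ p * (1 - d / x) ^ p := Real.mul_rpow hx.le (sub_nonneg.2 ht₁)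
    _ ≤ x ^ p * (1 - q * (d / x)) := by
      gcongr
      exact one_sub_rpow_le_one_sub_mul hq₀ hq₁ hqp (by positivity) ht₁
    _ = x ^ p - q * d * x ^ (p - 1) := by
      rw [Real.rpow_sub_one hx.ne']
      ring

theorem sub_mul_rpow_one_sub_rpow_le {c ε : ℝ} (hq₀ : 0 ≤ q) (hq₁ : q ≤ 1) (hqp : q ≤ p)
    (hx : 0 < x) (hc : 0 ≤ c) (hcx : c * x ^ (1 - ε) ≤ x) :
    (x - c * x ^ (1 - ε)) ^ p ≤ x ^ p - q * c * x ^ (p - ε) :=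
  calc
    (x - c * x ^ (1 - ε)) ^ p ≤ x ^ p - q * (c * x ^ (1 - ε)) * x ^ (p - 1) :=
      sub_rpow_le_rpow_sub_mul_rpow_sub_one hq₀ hq₁ hqp hx (by positivity) hcx
    _ = x ^ p - q * c * (x ^ (1 - ε) * x ^ (p - 1)) := by ring
    _ = x ^ p - q * c * x ^ (p - ε) := by
      rw [← Real.rpow_add hx, show 1 - ε + (p - 1) = p - ε by ring]

end

theorem eflh_recursion_general_general {C x ε : ℝ} (hC : 4 ≤ C) (hx : 1 ≤ x) (hε : 0 ≤ ε) :
    C * (x - x ^ (1 - ε) / 2) ^ ((1 + ε) / 2) + x ^ ((1 - ε) / 2) ≤ C * x ^ ((1 + ε) / 2) := by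
  have hx₀ : 0 < x := by linarith
  have hhalf : 1 / 2 * x ^ (1 - ε) ≤ x := by
    linarith [Real.rpow_le_self_of_one_le hx (sub_le_self 1 hε)]
  have hexp : (1 + ε) / 2 - ε = (1 - ε) / 2 := by ring
  have hdrop : (x - x ^ (1 - ε) / 2) ^ ((1 + ε) / 2) ≤
      x ^ ((1 + ε) / 2) - 1 / 4 * x ^ ((1 - ε) / 2) :=
    calc
      (x - x ^ (1 - ε) / 2) ^ ((1 + ε) / 2) = (x - 1 / 2 * x ^ (1 - ε)) ^ ((1 + ε) / 2) := by
        rw [one_div_mul_eq_div]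
      _ ≤ x ^ ((1 + ε) / 2) - 1 / 2 * (1 / 2) * x ^ ((1 + ε) / 2 - ε) :=
        sub_mul_rpow_one_sub_rpow_le (by norm_num) (by norm_num) (by linarith) hx₀ (by norm_num)
          hhalf
      _ = x ^ ((1 + ε) / 2) - 1 / 4 * x ^ ((1 - ε) / 2) := by
        rw [hexp]
        ring
  calc
    C * (x - x ^ (1 - ε) / 2) ^ ((1 + ε) / 2) + x ^ ((1 - ε) / 2)
      ≤ C * (x ^ ((1 + ε) / 2) - 1 / 4 * x ^ ((1 - ε) / 2)) + C / 4 * x ^ ((1 - ε) / 2) := by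
        gcongr
        exact le_mul_of_one_le_left (by positivity) (by linarith)
    _ = C * x ^ ((1 + ε) / 2) := by ring

/-- Lemma C.1 of the paper: the generalized recursion inequality for the
`O(|I|^((1+ε)/2))` adaptive regret bound of the full EFLH algorithm. -/
theorem eflh_recursion_general (x : ℝ) (hx : 1 ≤ x) (ε : ℝ) (hε : 0 < ε)
    (hε' : ε < 1 / 2) :
    8 * x ^ ((1 + ε) / 2) ≥
      8 * (x - x ^ (1 - ε) / 2) ^ ((1 + ε) / 2) + (x / 2) ^ ((1 - ε) / 2) := by
  have hhalf : (x / 2) ^ ((1 - ε) / 2) ≤ x ^ ((1 - ε) / 2) :=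
    Real.rpow_le_rpow (by linarith) (by linarith) (by linarith)
  linarith [eflh_recursion_general_general (C := 8) (by norm_num) hx hε.le]
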